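/- Suppose (φ, θ, u, p̃) are smooth spatially periodic fields on (0,T) × ℝ^d with θ > 0 everywhere that solve the NACNS system (AC), (IE), (NS), (DF). Then for every t ∈ (0,T) one has (d/dt) ∫_Ω s dx = D(t) + ∫_Ω (Q/θ) dx, and the entropy production satisfies D(t) ≥ 0. In particular, if Q ≡ 0 then t ↦ ∫_Ω s dx is nondecreasing (entropy production). -/

import Mathlib

/-!
The proof rests on a local entropy balance: along a solution,

  `∂ₜs = M (μ/θ)² + K |∇(1/θ)|² + (η/θ) |Du|² + Q/θ - div J`,
  `J = u s + ∇G(∇φ) A + (1/θ) K ∇(1/θ)`, with `A = ∂ₜφ + u·∇φ`.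

The Gibbs relation `de = ∂_φ f dφ + θ (ds + ∇G(∇φ)·d∇φ)` (`gibbs`), taken along the material
direction `∂ₜ + u·∇`, turns the energy equation into an equation for `s`. Commuting `∇` with the
material derivative of `φ` produces the term `∇G(∇φ)ᵢ ∂ⱼφ ∂ᵢuⱼ`, which cancels the Korteweg power
`σ̃:∇u / θ`; what multiplies `A` is then `-μ/θ`, and the Allen-Cahn equation makes it
`M (μ/θ)²`. This is `balance_algebra`, applied to the fields in `local_entropy_balance`.

Integrating over the box, the flux `J` drops out: it is periodic and `C¹`, since `e`, `s` involve
only first derivatives of the `C²` function `f`, and `∇G` is `C¹` (`integral_divg_eq_zero`). All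
fields are regular for every real time, so `hasDerivAt_integral_box` gives an actual derivative of
`t ↦ ∫ s`. The entropy production has a nonnegative integrand, which gives monotonicity when
`Q = 0`.
-/

open MeasureTheory

noncomputable section

/-- `i`-th spatial partial derivative of a scalar field. -/
def pd {d : ℕ} (i : Fin d) (g : (Fin d → ℝ) → ℝ) (x : Fin d → ℝ) : ℝ :=
  fderiv ℝ g x (Pi.single i 1)

/-- Spatial gradient of a scalar field. -/
def grad {d : ℕ} (g : (Fin d → ℝ) → ℝ) (x : Fin d → ℝ) : Fin d → ℝ :=
  fun i => pd i g x

/-- Divergence of a vector field. -/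
def divg {d : ℕ} (u : (Fin d → ℝ) → Fin d → ℝ) (x : Fin d → ℝ) : ℝ :=
  ∑ i, pd i (fun y => u y i) x

/-- Euclidean dot product. -/
def dot {d : ℕ} (a b : Fin d → ℝ) : ℝ := ∑ i, a i * b i

/-- Time derivative of a time-dependent scalar field. -/
def dt {d : ℕ} (g : ℝ → (Fin d → ℝ) → ℝ) (t : ℝ) (x : Fin d → ℝ) : ℝ :=
  deriv (fun s => g s x) t

/-- The box `Ω = [0, L₁] × ⋯ × [0, L_d]`. -/
def box {d : ℕ} (L : Fin d → ℝ) : Set (Fin d → ℝ) :=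
  Set.univ.pi fun i => Set.Icc 0 (L i)

/-- Spatial periodicity with periods `L`. -/
def SpacePeriodic {d : ℕ} (L : Fin d → ℝ) (g : (Fin d → ℝ) → ℝ) : Prop :=
  ∀ x i, g (x + Pi.single i (L i)) = g x

/-- Entropy density `s = -G(∇φ) - ∂_θ f(φ, θ)`. -/
def entS {d : ℕ} (G : (Fin d → ℝ) → ℝ) (f : ℝ → ℝ → ℝ)
    (φ θ : ℝ → (Fin d → ℝ) → ℝ) (t : ℝ) (x : Fin d → ℝ) : ℝ :=
  -G (grad (φ t) x) - deriv (f (φ t x)) (θ t x)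

/-- Internal energy density `e = f(φ, θ) - θ ∂_θ f(φ, θ)`. -/
def intE {d : ℕ} (f : ℝ → ℝ → ℝ) (φ θ : ℝ → (Fin d → ℝ) → ℝ)
    (t : ℝ) (x : Fin d → ℝ) : ℝ :=
  f (φ t x) (θ t x) - θ t x * deriv (f (φ t x)) (θ t x)

/-- Total energy density `e_tot = e + |u|²/2`. -/
def totE {d : ℕ} (f : ℝ → ℝ → ℝ) (φ θ : ℝ → (Fin d → ℝ) → ℝ)
    (u : ℝ → (Fin d → ℝ) → Fin d → ℝ) (t : ℝ) (x : Fin d → ℝ) : ℝ :=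
  intE f φ θ t x + (1 / 2) * ∑ i, (u t x i) ^ 2

/-- Chemical potential `μ = -θ div(∇G(∇φ)) + ∂_φ f(φ, θ)`. -/
def chemMu {d : ℕ} (G : (Fin d → ℝ) → ℝ) (f : ℝ → ℝ → ℝ)
    (φ θ : ℝ → (Fin d → ℝ) → ℝ) (t : ℝ) (x : Fin d → ℝ) : ℝ :=
  -θ t x * divg (fun y => grad G (grad (φ t) y)) x
    + deriv (fun a => f a (θ t x)) (φ t x)

/-- Korteweg stress `σ̃ᵢⱼ = θ (∇G(∇φ))ᵢ ∂ⱼφ`. -/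
def korteweg {d : ℕ} (G : (Fin d → ℝ) → ℝ)
    (φ θ : ℝ → (Fin d → ℝ) → ℝ) (t : ℝ) (x : Fin d → ℝ) (i j : Fin d) : ℝ :=
  θ t x * grad G (grad (φ t) x) i * pd j (φ t) x

/-- Symmetric gradient `Dw = (∇w + (∇w)ᵀ)/2` of a (spatial) vector field. -/
def symGrad {d : ℕ} (w : (Fin d → ℝ) → Fin d → ℝ) (x : Fin d → ℝ) (i j : Fin d) : ℝ :=
  (pd i (fun y => w y j) x + pd j (fun y => w y i) x) / 2

/-- Entropy production functional `D(t)`. -/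
def entProd {d : ℕ} (L : Fin d → ℝ) (G : (Fin d → ℝ) → ℝ) (f : ℝ → ℝ → ℝ)
    (M K η : ℝ → ℝ → ℝ) (φ θ : ℝ → (Fin d → ℝ) → ℝ)
    (u : ℝ → (Fin d → ℝ) → Fin d → ℝ) (t : ℝ) : ℝ :=
  ∫ x in box L,
    (M (φ t x) (θ t x) * (chemMu G f φ θ t x / θ t x) ^ 2
      + K (φ t x) (θ t x) * ∑ i, (pd i (fun z => (θ t z)⁻¹) x) ^ 2
      + η (φ t x) (θ t x) / θ t x * ∑ i, ∑ j, (symGrad (u t) x i j) ^ 2)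

/-- Joint `C^n` regularity of a time-dependent scalar field on all of `ℝ × ℝ^d`, time included. -/
abbrev JointC {d : ℕ} (n : WithTop ℕ∞) (g : ℝ → (Fin d → ℝ) → ℝ) : Prop :=
  ContDiff ℝ n fun q : ℝ × (Fin d → ℝ) => g q.1 q.2

/-! ### Partial derivatives of jointly smooth fields -/

section Calculus

variable {d : ℕ} {g h : ℝ → (Fin d → ℝ) → ℝ} {a b : (Fin d → ℝ) → ℝ} {n m : WithTop ℕ∞}

lemma pd_eq_fderiv {t : ℝ} {x : Fin d → ℝ} (i : Fin d)
    (hg : DifferentiableAt ℝ (fun q : ℝ × (Fin d → ℝ) => g q.1 q.2) (t, x)) :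
    pd i (g t) x
      = fderiv ℝ (fun q : ℝ × (Fin d → ℝ) => g q.1 q.2) (t, x) (0, Pi.single i 1) := by
  have h1 : HasFDerivAt (fun y : Fin d → ℝ => (t, y))
      (ContinuousLinearMap.inr ℝ ℝ (Fin d → ℝ)) x := hasFDerivAt_prodMk_right t x
  have h2 : HasFDerivAt (g t) _ x :=
    HasFDerivAt.comp (g := fun q : ℝ × (Fin d → ℝ) => g q.1 q.2) x hg.hasFDerivAt h1
  simp [pd, h2.fderiv]

lemma hasDerivAt_time {t : ℝ} {x : Fin d → ℝ}
    (hg : DifferentiableAt ℝ (fun q : ℝ × (Fin d → ℝ) => g q.1 q.2) (t, x)) :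
    HasDerivAt (fun s => g s x)
      (fderiv ℝ (fun q : ℝ × (Fin d → ℝ) => g q.1 q.2) (t, x) (1, 0)) t := by
  have h1 : HasFDerivAt (fun s : ℝ => (s, x))
      (ContinuousLinearMap.inl ℝ ℝ (Fin d → ℝ)) t := hasFDerivAt_prodMk_left t x
  have h2 : HasFDerivAt (fun s => g s x) _ t :=
    HasFDerivAt.comp (g := fun q : ℝ × (Fin d → ℝ) => g q.1 q.2) t hg.hasFDerivAt h1
  simpa using h2.hasDerivAt

lemma dt_eq_fderiv {t : ℝ} {x : Fin d → ℝ}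
    (hg : DifferentiableAt ℝ (fun q : ℝ × (Fin d → ℝ) => g q.1 q.2) (t, x)) :
    dt g t x = fderiv ℝ (fun q : ℝ × (Fin d → ℝ) => g q.1 q.2) (t, x) (1, 0) :=
  (hasDerivAt_time hg).deriv

lemma JointC.diffAt (hg : JointC n g) (hn : n ≠ 0) (q : ℝ × (Fin d → ℝ)) :
    DifferentiableAt ℝ (fun q : ℝ × (Fin d → ℝ) => g q.1 q.2) q :=
  (hg.differentiable hn) q

lemma JointC.pd (hg : JointC m g) (i : Fin d) (hnm : n + 1 ≤ m) :
    JointC n fun t => _root_.pd i (g t) := by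
  have hm : m ≠ 0 := by
    rintro rfl
    simp at hnm
  have : (fun q : ℝ × (Fin d → ℝ) => _root_.pd i (g q.1) q.2)
      = fun q => fderiv ℝ (fun q : ℝ × (Fin d → ℝ) => g q.1 q.2) q (0, Pi.single i 1) :=
    funext fun q => pd_eq_fderiv i (hg.diffAt hm q)
  unfold JointC
  rw [this]
  exact (ContDiff.fderiv_right hg hnm).clm_apply contDiff_const

lemma JointC.dt (hg : JointC m g) (hnm : n + 1 ≤ m) : JointC n (_root_.dt g) := by
  have hm : m ≠ 0 := by
    rintro rfl
    simp at hnm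
  have : (fun q : ℝ × (Fin d → ℝ) => _root_.dt g q.1 q.2)
      = fun q => fderiv ℝ (fun q : ℝ × (Fin d → ℝ) => g q.1 q.2) q (1, 0) :=
    funext fun q => dt_eq_fderiv (hg.diffAt hm q)
  unfold JointC
  rw [this]
  exact (ContDiff.fderiv_right hg hnm).clm_apply contDiff_const

lemma JointC.slice (hg : JointC n g) (t : ℝ) : ContDiff ℝ n (g t) :=
  ContDiff.comp (g := fun q : ℝ × (Fin d → ℝ) => g q.1 q.2) hg (contDiff_prodMk_right t)

lemma fderiv_fderiv_comm {E : Type*} [NormedAddCommGroup E] [NormedSpace ℝ E] {F : E → ℝ}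
    (hF : ContDiff ℝ 2 F) (q v w : E) :
    fderiv ℝ (fun p => fderiv ℝ F p v) q w = fderiv ℝ (fun p => fderiv ℝ F p w) q v := by
  have h1 : DifferentiableAt ℝ (fderiv ℝ F) q :=
    ((hF.fderiv_right (m := 1) (by norm_num)).differentiable (by norm_num)) q
  have h2 := (hF.contDiffAt (x := q)).isSymmSndFDerivAt (by simp)
  rw [fderiv_clm_apply h1 (differentiableAt_const _),
    fderiv_clm_apply h1 (differentiableAt_const _)]
  simpa using h2 w v

lemma pd_pd_comm (hg : JointC 2 g) (t : ℝ) (x : Fin d → ℝ) (i j : Fin d) :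
    pd i (fun y => pd j (g t) y) x = pd j (fun y => pd i (g t) y) x := by
  have h0 : ∀ q, DifferentiableAt ℝ (fun q : ℝ × (Fin d → ℝ) => g q.1 q.2) q :=
    hg.diffAt (by norm_num)
  have key : ∀ k, (fun q : ℝ × (Fin d → ℝ) => pd k (g q.1) q.2)
      = fun q => fderiv ℝ (fun q : ℝ × (Fin d → ℝ) => g q.1 q.2) q (0, Pi.single k 1) :=
    fun k => funext fun q => pd_eq_fderiv k (h0 q)
  have h1 : ∀ k, JointC 1 fun t => pd k (g t) := fun k => hg.pd k (by norm_num)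
  have e1 := pd_eq_fderiv (g := fun t => pd j (g t)) i ((h1 j).diffAt (by norm_num) (t, x))
  have e2 := pd_eq_fderiv (g := fun t => pd i (g t)) j ((h1 i).diffAt (by norm_num) (t, x))
  rw [key] at e1 e2
  rw [e1, e2, fderiv_fderiv_comm hg]

lemma pd_dt_comm (hg : JointC 2 g) (t : ℝ) (x : Fin d → ℝ) (i : Fin d) :
    pd i (dt g t) x = dt (fun s => pd i (g s)) t x := by
  have h0 : ∀ q, DifferentiableAt ℝ (fun q : ℝ × (Fin d → ℝ) => g q.1 q.2) q :=
    hg.diffAt (by norm_num)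
  have k1 : (fun q : ℝ × (Fin d → ℝ) => pd i (g q.1) q.2)
      = fun q => fderiv ℝ (fun q : ℝ × (Fin d → ℝ) => g q.1 q.2) q (0, Pi.single i 1) :=
    funext fun q => pd_eq_fderiv i (h0 q)
  have k2 : (fun q : ℝ × (Fin d → ℝ) => dt g q.1 q.2)
      = fun q => fderiv ℝ (fun q : ℝ × (Fin d → ℝ) => g q.1 q.2) q (1, 0) :=
    funext fun q => dt_eq_fderiv (h0 q)
  have h1 : JointC 1 fun t => pd i (g t) := hg.pd i (by norm_num)
  have h2 : JointC 1 (dt g) := hg.dt (by norm_num)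
  have e1 := pd_eq_fderiv i (h2.diffAt (by norm_num) (t, x))
  have e2 := dt_eq_fderiv (g := fun s => pd i (g s)) (h1.diffAt (by norm_num) (t, x))
  rw [k2] at e1
  rw [k1] at e2
  rw [e1, e2, fderiv_fderiv_comm hg]

lemma pd_add {x : Fin d → ℝ} (i : Fin d) (ha : DifferentiableAt ℝ a x)
    (hb : DifferentiableAt ℝ b x) :
    pd i (fun y => a y + b y) x = pd i a x + pd i b x := by
  simp [pd, fderiv_fun_add ha hb]

lemma pd_neg {x : Fin d → ℝ} (i : Fin d) :
    pd i (fun y => -a y) x = -pd i a x := by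
  simp [pd, fderiv_fun_neg]

lemma pd_mul {x : Fin d → ℝ} (i : Fin d) (ha : DifferentiableAt ℝ a x)
    (hb : DifferentiableAt ℝ b x) :
    pd i (fun y => a y * b y) x = a x * pd i b x + pd i a x * b x := by
  simp [pd, fderiv_fun_mul ha hb]
  ring

lemma pd_sum {ι : Type*} (s : Finset ι) {c : ι → (Fin d → ℝ) → ℝ} {x : Fin d → ℝ} (i : Fin d)
    (hc : ∀ k, DifferentiableAt ℝ (c k) x) :
    pd i (fun y => ∑ k ∈ s, c k y) x = ∑ k ∈ s, pd i (c k) x := by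
  simp [pd, fderiv_fun_sum fun k _ => hc k]

lemma ContDiff.pd_slice (ha : ContDiff ℝ m a) (i : Fin d) (hnm : n + 1 ≤ m) :
    ContDiff ℝ n (pd i a) :=
  (ha.fderiv_right hnm).clm_apply contDiff_const

end Calculus

/-! ### Integration over a period cell -/

section Periodic

variable {d : ℕ} {L : Fin d → ℝ}

lemma SpacePeriodic.pd {a : (Fin d → ℝ) → ℝ} (ha : SpacePeriodic L a) (i : Fin d) :
    SpacePeriodic L (pd i a) := by
  intro x j
  have : (fun y => a (y + Pi.single j (L j))) = a := funext fun y => ha y j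
  unfold _root_.pd
  rw [← fderiv_comp_add_right, this]

lemma box_eq_Icc (L : Fin d → ℝ) : box L = Set.Icc 0 L := Set.pi_univ_Icc 0 L

lemma isCompact_box (L : Fin d → ℝ) : IsCompact (box L) :=
  isCompact_univ_pi fun _ => isCompact_Icc

lemma integrableOn_box {a : (Fin d → ℝ) → ℝ} (ha : Continuous a) : IntegrableOn a (box L) :=
  ha.continuousOn.integrableOn_compact (isCompact_box L)

/-- The integral over a period cell of the divergence of a periodic `C¹` vector field vanishes:
by the divergence theorem it is a sum of flux differences over opposite faces. -/
lemma integral_divg_eq_zero (hL : ∀ i, 0 < L i) (V : (Fin d → ℝ) → Fin d → ℝ)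
    (hV : ∀ i, ContDiff ℝ 1 fun x => V x i) (hper : ∀ i, SpacePeriodic L fun x => V x i) :
    ∫ x in box L, divg V x = 0 := by
  cases d with
  | zero => simp [divg]
  | succ n =>
    have hc : Continuous (divg V) :=
      continuous_finsetSum _ fun i _ => ((hV i).pd_slice (n := 0) i (by norm_num)).continuous
    have hi := integrableOn_box (L := L) hc
    rw [box_eq_Icc] at hi ⊢
    have := integral_divergence_of_hasFDerivAt_off_countable' (0 : Fin (n + 1) → ℝ) L
      (fun i => (hL i).le) (fun i x => V x i) (fun i x => fderiv ℝ (fun y => V y i) x) ∅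
      Set.countable_empty (fun i => (hV i).continuous.continuousOn)
      (fun x _ i => ((hV i).differentiable (by norm_num) x).hasFDerivAt) hi
    refine Eq.trans this (Finset.sum_eq_zero fun i _ => ?_)
    rw [sub_eq_zero]
    congr 1
    funext y
    have h1 := hper i (i.insertNth (α := fun _ => ℝ) 0 y) i
    have h2 : i.insertNth (α := fun _ => ℝ) 0 y + Pi.single i (L i)
        = i.insertNth (α := fun _ => ℝ) (L i) y := by
      funext k
      refine Fin.succAboveCases i ?_ (fun k => ?_) k <;> simp
    rw [h2] at h1
    exact h1

/-- Differentiation under the integral sign for a jointly `C¹` integrand on the compact box. -/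
lemma hasDerivAt_integral_box {g : ℝ → (Fin d → ℝ) → ℝ} (hg : JointC 1 g) (t : ℝ) :
    HasDerivAt (fun s => ∫ x in box L, g s x) (∫ x in box L, dt g t x) t := by
  have h1 : JointC 0 (dt g) := hg.dt (by norm_num)
  obtain ⟨C, hC⟩ := ((isCompact_Icc (a := t - 1) (b := t + 1)).prod
    (isCompact_box L)).exists_bound_of_continuousOn h1.continuous.continuousOn
  have hmeas : MeasurableSet (box L) := (isCompact_box L).measurableSet
  refine (hasDerivAt_integral_of_dominated_loc_of_deriv_le (F := g) (F' := dt g)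
    (bound := fun _ => C) (s := Set.Icc (t - 1) (t + 1))
    (Icc_mem_nhds (by linarith) (by linarith)) (.of_forall fun s => ?_) ?_ ?_ ?_ ?_ ?_).2
  · exact (hg.slice s).continuous.aestronglyMeasurable
  · exact integrableOn_box (hg.slice t).continuous
  · exact (h1.slice t).continuous.aestronglyMeasurable
  · exact (ae_restrict_iff' hmeas).2 (.of_forall fun x hx s hs => hC (s, x) ⟨hs, hx⟩)
  · exact integrableOn_box (L := L) (a := fun _ => C) continuous_const
  · refine .of_forall fun x s _ => ?_
    have := hg.diffAt one_ne_zero (s, x)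
    rw [dt_eq_fderiv this]
    exact hasDerivAt_time this

end Periodic

/-! ### Thermodynamic potentials along the fields -/

section Thermo

variable {d : ℕ} {G : (Fin d → ℝ) → ℝ} {f : ℝ → ℝ → ℝ} {φ θ : ℝ → (Fin d → ℝ) → ℝ}

lemma hasFDerivAt_freeEnergy
    (hf : ContDiffOn ℝ 2 (fun q : ℝ × ℝ => f q.1 q.2) (Set.univ ×ˢ Set.Ioi 0))
    {a c : ℝ} (hc : 0 < c) :
    HasFDerivAt (fun q : ℝ × ℝ => f q.1 q.2)
      (deriv (fun a => f a c) a • ContinuousLinearMap.fst ℝ ℝ ℝ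
        + deriv (f a) c • ContinuousLinearMap.snd ℝ ℝ ℝ) (a, c) := by
  have ho : IsOpen (Set.univ ×ˢ Set.Ioi 0 : Set (ℝ × ℝ)) := isOpen_univ.prod isOpen_Ioi
  have hd : DifferentiableAt ℝ (fun q : ℝ × ℝ => f q.1 q.2) (a, c) :=
    (hf.contDiffAt (x := (a, c)) (ho.mem_nhds ⟨trivial, hc⟩)).differentiableAt (by norm_num)
  have h1 : HasFDerivAt (fun s => f s c) _ a :=
    HasFDerivAt.comp (g := fun q : ℝ × ℝ => f q.1 q.2) (f := fun s => (s, c)) a hd.hasFDerivAt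
      (hasFDerivAt_prodMk_left a c)
  have h2 : HasFDerivAt (f a) _ c :=
    HasFDerivAt.comp (g := fun q : ℝ × ℝ => f q.1 q.2) c hd.hasFDerivAt
      (hasFDerivAt_prodMk_right a c)
  have e1 := h1.hasDerivAt.deriv
  have e2 := h2.hasDerivAt.deriv
  convert hd.hasFDerivAt using 1
  rw [e1, e2]
  ext <;> simp

/-- `∂_θ f(φ, θ)` is jointly `C¹`, since `f` is `C²` where `θ > 0`. -/
lemma jointC_dfdtheta
    (hf : ContDiffOn ℝ 2 (fun q : ℝ × ℝ => f q.1 q.2) (Set.univ ×ˢ Set.Ioi 0))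
    (hφ : JointC 1 φ) (hθ : JointC 1 θ) (hpos : ∀ t x, 0 < θ t x) :
    JointC 1 fun t x => deriv (f (φ t x)) (θ t x) := by
  have ho : IsOpen (Set.univ ×ˢ Set.Ioi 0 : Set (ℝ × ℝ)) := isOpen_univ.prod isOpen_Ioi
  have h1 := (hf.fderiv_of_isOpen ho (m := 1) (by norm_num)).comp_contDiff
    (hφ.prodMk hθ) (fun q => ⟨trivial, hpos q.1 q.2⟩)
  have h2 := h1.clm_apply (contDiff_const (c := ((0, 1) : ℝ × ℝ)))
  refine (congrArg (ContDiff ℝ 1) (funext fun q => ?_)).mp h2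
  simp [(hasFDerivAt_freeEnergy hf (hpos q.1 q.2)).fderiv]

lemma jointC_dfdphi
    (hf : ContDiffOn ℝ 2 (fun q : ℝ × ℝ => f q.1 q.2) (Set.univ ×ˢ Set.Ioi 0))
    (hφ : JointC 1 φ) (hθ : JointC 1 θ) (hpos : ∀ t x, 0 < θ t x) :
    JointC 1 fun t x => deriv (fun a => f a (θ t x)) (φ t x) := by
  have ho : IsOpen (Set.univ ×ˢ Set.Ioi 0 : Set (ℝ × ℝ)) := isOpen_univ.prod isOpen_Ioi
  have h1 := (hf.fderiv_of_isOpen ho (m := 1) (by norm_num)).comp_contDiff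
    (hφ.prodMk hθ) (fun q => ⟨trivial, hpos q.1 q.2⟩)
  have h2 := h1.clm_apply (contDiff_const (c := ((1, 0) : ℝ × ℝ)))
  refine (congrArg (ContDiff ℝ 1) (funext fun q => ?_)).mp h2
  simp [(hasFDerivAt_freeEnergy hf (hpos q.1 q.2)).fderiv]

lemma jointC_intE
    (hf : ContDiffOn ℝ 2 (fun q : ℝ × ℝ => f q.1 q.2) (Set.univ ×ˢ Set.Ioi 0))
    (hφ : JointC 1 φ) (hθ : JointC 1 θ) (hpos : ∀ t x, 0 < θ t x) :
    JointC 1 (intE f φ θ) :=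
  (((hf.of_le (by norm_num)).comp_contDiff (hφ.prodMk hθ)
    (fun q => ⟨trivial, hpos q.1 q.2⟩))).sub (hθ.mul (jointC_dfdtheta hf hφ hθ hpos))

lemma contDiff_gradPhi (hφ : JointC 2 φ) :
    ContDiff ℝ 1 fun q : ℝ × (Fin d → ℝ) => grad (φ q.1) q.2 :=
  contDiff_pi.2 fun i => hφ.pd i (by norm_num)

lemma jointC_entS (hG : ContDiff ℝ 2 G)
    (hf : ContDiffOn ℝ 2 (fun q : ℝ × ℝ => f q.1 q.2) (Set.univ ×ˢ Set.Ioi 0))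
    (hφ : JointC 2 φ) (hθ : JointC 1 θ) (hpos : ∀ t x, 0 < θ t x) :
    JointC 1 (entS G f φ θ) :=
  (((hG.of_le (by norm_num)).comp (contDiff_gradPhi hφ)).neg).sub
    (jointC_dfdtheta hf (hφ.of_le (by norm_num)) hθ hpos)

lemma jointC_gradG (hG : ContDiff ℝ 2 G) (hφ : JointC 2 φ) (i : Fin d) :
    JointC 1 fun t x => grad G (grad (φ t) x) i :=
  (hG.pd_slice i (n := 1) (by norm_num)).comp (contDiff_gradPhi hφ)

/-- Gibbs relation `de = ∂_φ f dφ + θ (ds + ∇G(∇φ) · d∇φ)` in an arbitrary space-time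
direction `v`.  The two occurrences of `d(∂_θ f)` cancel, so no second derivative of `f`
appears. -/
lemma gibbs (hG : ContDiff ℝ 2 G)
    (hf : ContDiffOn ℝ 2 (fun q : ℝ × ℝ => f q.1 q.2) (Set.univ ×ˢ Set.Ioi 0))
    (hφ : JointC 2 φ) (hθ : JointC 1 θ) (hpos : ∀ t x, 0 < θ t x)
    (q v : ℝ × (Fin d → ℝ)) :
    fderiv ℝ (fun q : ℝ × (Fin d → ℝ) => intE f φ θ q.1 q.2) q v
      = deriv (fun a => f a (θ q.1 q.2)) (φ q.1 q.2)
          * fderiv ℝ (fun q : ℝ × (Fin d → ℝ) => φ q.1 q.2) q v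
        + θ q.1 q.2 * (fderiv ℝ (fun q : ℝ × (Fin d → ℝ) => entS G f φ θ q.1 q.2) q v
          + ∑ i, grad G (grad (φ q.1) q.2) i
            * fderiv ℝ (fun q : ℝ × (Fin d → ℝ) => pd i (φ q.1) q.2) q v) := by
  have hφ1 : JointC 1 φ := hφ.of_le (by norm_num)
  have dφ := (hφ1.diffAt one_ne_zero q).hasFDerivAt
  have dθ := (hθ.diffAt one_ne_zero q).hasFDerivAt
  have dH := ((jointC_dfdtheta hf hφ1 hθ hpos).diffAt one_ne_zero q).hasFDerivAt
  have dF := (hasFDerivAt_freeEnergy hf (a := φ q.1 q.2) (hpos q.1 q.2)).comp q (dφ.prodMk dθ)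
  have dE : HasFDerivAt (fun q : ℝ × (Fin d → ℝ) => intE f φ θ q.1 q.2) _ q :=
    dF.sub (dθ.mul dH)
  have dP : HasFDerivAt (fun q : ℝ × (Fin d → ℝ) => grad (φ q.1) q.2) _ q :=
    hasFDerivAt_pi.2 fun i =>
      ((hφ.pd i (n := 1) (by norm_num)).diffAt one_ne_zero q).hasFDerivAt
  have dG := ((hG.differentiable (by norm_num)) (grad (φ q.1) q.2)).hasFDerivAt.comp q dP
  have dS : HasFDerivAt (fun q : ℝ × (Fin d → ℝ) => entS G f φ θ q.1 q.2) _ q :=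
    dG.neg.sub dH
  have hsum : ∀ w : Fin d → ℝ, fderiv ℝ G (grad (φ q.1) q.2) w
      = ∑ i, grad G (grad (φ q.1) q.2) i * w i := by
    intro w
    conv_lhs => rw [pi_eq_sum_univ' w, map_sum]
    refine Finset.sum_congr rfl fun i _ => ?_
    rw [map_smul, smul_eq_mul, mul_comm]
    rfl
  rw [dE.fderiv, dS.fderiv]
  simp [hsum]
  ring

end Thermo

/-! ### The local entropy balance -/

section Balance

/-- The algebra behind the local entropy balance, with the values at one point of all the fields
and their derivatives as independent real variables: `Et, St, φt` and `Ex, Sx, p` are the time and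
space derivatives of `e, s, φ`, `g = ∇G(∇φ)` with `dg i = ∂ᵢgᵢ`, `A` is the material derivative of
`φ` with gradient `A'`, `r = ∇(1/θ)`, `dk i = ∂ᵢ(K rᵢ)`, `Pt i = ∂ₜ∂ᵢφ`, `Px j i = ∂ⱼ∂ᵢφ` and
`DU i j = ∂ᵢuⱼ`. -/
lemma balance_algebra {d : ℕ} {ϑ fφ A φt Et St s M μ Q η K D2 : ℝ} (hϑ : 0 < ϑ)
    {Ex Sx p g Pt U A' dg r dk : Fin d → ℝ} {Px DU : Fin d → Fin d → ℝ}
    (hEt : Et = fφ * φt + ϑ * (St + ∑ i, g i * Pt i))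
    (hEx : ∀ j, Ex j = fφ * p j + ϑ * (Sx j + ∑ i, g i * Px j i))
    (hA : A = φt + ∑ j, U j * p j)
    (hA' : ∀ i, A' i = Pt i + ∑ j, (U j * Px j i + DU i j * p j))
    (hAC : A = -M * μ / ϑ) (hμ : μ = -ϑ * ∑ i, dg i + fφ)
    (hIE : Et + ∑ j, U j * Ex j
      = -∑ i, dk i + η * D2 - (∑ i, ∑ j, ϑ * g i * p j * DU i j) + Q)
    (hDF : ∑ i, DU i i = 0) :
    St = (M * (μ / ϑ) ^ 2 + K * ∑ i, r i ^ 2 + η / ϑ * D2) + Q / ϑ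
      + ∑ i, -((U i * Sx i + DU i i * s) + (g i * A' i + dg i * A)
          + (ϑ⁻¹ * dk i + r i * (K * r i))) := by
  have e1 : ∑ j, U j * Ex j = fφ * ∑ j, U j * p j
      + ϑ * (∑ j, U j * Sx j + ∑ i, ∑ j, g i * (U j * Px j i)) := by
    rw [Finset.sum_comm]
    simp only [hEx, Finset.mul_sum, ← Finset.sum_add_distrib, mul_add]
    refine Finset.sum_congr rfl fun j _ => ?_
    have : ∀ i, ϑ * (g i * (U j * Px j i)) = U j * (ϑ * (g i * Px j i)) := fun i => by ring
    simp only [this]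
    ring
  have e2 : ∑ i, g i * A' i = ∑ i, g i * Pt i
      + (∑ i, ∑ j, g i * (U j * Px j i) + ∑ i, ∑ j, g i * p j * DU i j) := by
    simp only [hA', mul_add, Finset.mul_sum, ← Finset.sum_add_distrib]
    refine Finset.sum_congr rfl fun i _ => ?_
    congr 1
    exact Finset.sum_congr rfl fun j _ => by ring
  have e3 : ∑ i, ∑ j, ϑ * g i * p j * DU i j = ϑ * ∑ i, ∑ j, g i * p j * DU i j := by
    simp only [Finset.mul_sum, mul_assoc]
  have e4 : ∑ i, -((U i * Sx i + DU i i * s) + (g i * A' i + dg i * A)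
      + (ϑ⁻¹ * dk i + r i * (K * r i)))
      = -((∑ i, U i * Sx i + (∑ i, DU i i) * s) + (∑ i, g i * A' i + (∑ i, dg i) * A)
        + (ϑ⁻¹ * ∑ i, dk i + K * ∑ i, r i ^ 2)) := by
    simp only [Finset.mul_sum, Finset.sum_mul, ← Finset.sum_add_distrib, ← Finset.sum_neg_distrib]
    exact Finset.sum_congr rfl fun j _ => by ring
  rw [e4, e2, hDF]
  rw [e1, e3, hEt] at hIE
  generalize ∑ i, ∑ j, g i * (U j * Px j i) = a3 at *
  generalize ∑ i, ∑ j, g i * p j * DU i j = a4 at *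
  generalize ∑ i, g i * Pt i = a1 at *
  generalize ∑ j, U j * Sx j = a2 at *
  generalize ∑ j, U j * p j = a5 at *
  generalize ∑ i, dg i = a6 at *
  generalize ∑ i, dk i = a7 at *
  generalize ∑ i, r i ^ 2 = a8 at *
  -- material derivative of the entropy, obtained from the energy equation
  have hS : St + a2 = (-a7 + η * D2 - ϑ * a4 + Q - fφ * A) / ϑ - a1 - a3 := by
    rw [eq_sub_iff_add_eq, eq_sub_iff_add_eq, eq_div_iff hϑ.ne', hA]
    linarith
  have hMμ : M * (μ / ϑ) ^ 2 = -(μ / ϑ) * A := by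
    rw [hAC]
    ring
  have hμ' : μ / ϑ = -a6 + fφ / ϑ := by
    rw [hμ]
    field_simp
  rw [hMμ, hμ', eq_sub_of_add_eq hS]
  field_simp
  ring

variable {d : ℕ}

/-- Negative of the entropy flux, `-(u s + ∇G(∇φ) (∂ₜφ + u·∇φ) + (1/θ) K ∇(1/θ))`. -/
def entFlux (G : (Fin d → ℝ) → ℝ) (f K : ℝ → ℝ → ℝ) (φ θ : ℝ → (Fin d → ℝ) → ℝ)
    (u : ℝ → (Fin d → ℝ) → Fin d → ℝ) (t : ℝ) (x : Fin d → ℝ) (i : Fin d) : ℝ :=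
  -((u t x i * entS G f φ θ t x
      + grad G (grad (φ t) x) i * (dt φ t x + dot (u t x) (grad (φ t) x)))
    + (θ t x)⁻¹ * (K (φ t x) (θ t x) * pd i (fun z => (θ t z)⁻¹) x))

/-- Pointwise integrand of the entropy production. -/
def entProdDensity (G : (Fin d → ℝ) → ℝ) (f M K η : ℝ → ℝ → ℝ) (φ θ : ℝ → (Fin d → ℝ) → ℝ)
    (u : ℝ → (Fin d → ℝ) → Fin d → ℝ) (t : ℝ) (x : Fin d → ℝ) : ℝ :=
  M (φ t x) (θ t x) * (chemMu G f φ θ t x / θ t x) ^ 2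
    + K (φ t x) (θ t x) * ∑ i, (pd i (fun z => (θ t z)⁻¹) x) ^ 2
    + η (φ t x) (θ t x) / θ t x * ∑ i, ∑ j, (symGrad (u t) x i j) ^ 2

variable {G : (Fin d → ℝ) → ℝ} {f M K η : ℝ → ℝ → ℝ} {φ θ Q : ℝ → (Fin d → ℝ) → ℝ}
  {u : ℝ → (Fin d → ℝ) → Fin d → ℝ} {L : Fin d → ℝ}

lemma jointC_matDeriv (hφ : JointC 2 φ) (hu : ∀ i, JointC 1 fun t x => u t x i) :
    JointC 1 fun t x => dt φ t x + dot (u t x) (grad (φ t) x) :=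
  ContDiff.add (hφ.dt (by norm_num))
    (ContDiff.sum fun i _ => (hu i).mul (hφ.pd i (by norm_num)))

lemma contDiff_heatFlux (hK : ContDiff ℝ 1 fun q : ℝ × ℝ => K q.1 q.2)
    (hφ : JointC 1 φ) (hθ : JointC 2 θ) (hpos : ∀ t x, 0 < θ t x) (t : ℝ) (i : Fin d) :
    ContDiff ℝ 1 fun x => K (φ t x) (θ t x) * pd i (fun z => (θ t z)⁻¹) x :=
  (hK.comp ((hφ.slice t).prodMk ((hθ.slice t).of_le (by norm_num)))).mul
    (((hθ.slice t).inv fun x => (hpos t x).ne').pd_slice i (by norm_num))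

lemma contDiff_entFlux (hG : ContDiff ℝ 2 G)
    (hf : ContDiffOn ℝ 2 (fun q : ℝ × ℝ => f q.1 q.2) (Set.univ ×ˢ Set.Ioi 0))
    (hK : ContDiff ℝ 1 fun q : ℝ × ℝ => K q.1 q.2)
    (hφ : JointC 2 φ) (hθ : JointC 2 θ) (hpos : ∀ t x, 0 < θ t x)
    (hu : ∀ i, JointC 1 fun t x => u t x i) (t : ℝ) (i : Fin d) :
    ContDiff ℝ 1 fun x => entFlux G f K φ θ u t x i :=
  (((((hu i).slice t).mul
      ((jointC_entS hG hf hφ (hθ.of_le (by norm_num)) hpos).slice t)).add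
    (((jointC_gradG hG hφ i).slice t).mul ((jointC_matDeriv hφ hu).slice t))).add
    ((((hθ.slice t).of_le (by norm_num)).inv fun x => (hpos t x).ne').mul
      (contDiff_heatFlux hK (hφ.of_le (by norm_num)) hθ hpos t i))).neg

lemma periodic_entFlux (hφper : ∀ t, SpacePeriodic L (φ t)) (hθper : ∀ t, SpacePeriodic L (θ t))
    (huper : ∀ t j, SpacePeriodic L fun x => u t x j) (t : ℝ) (i : Fin d) :
    SpacePeriodic L fun x => entFlux G f K φ θ u t x i := by
  intro x j
  have h1 : ∀ s, φ s (x + Pi.single j (L j)) = φ s x := fun s => hφper s x j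
  have h2 : ∀ s, θ s (x + Pi.single j (L j)) = θ s x := fun s => hθper s x j
  have h3 : u t (x + Pi.single j (L j)) = u t x := funext fun k => huper t k x j
  have h4 : grad (φ t) (x + Pi.single j (L j)) = grad (φ t) x :=
    funext fun k => (hφper t).pd k x j
  have h5 : pd i (fun z => (θ t z)⁻¹) (x + Pi.single j (L j)) = pd i (fun z => (θ t z)⁻¹) x :=
    SpacePeriodic.pd (a := fun z => (θ t z)⁻¹) (fun y k => by simp only [hθper t y k]) i x j
  simp only [entFlux, entS, dt, h1, h2, h3, h4, h5]

/-- Local entropy balance: `∂ₜs` is the entropy production density plus `Q/θ`, up to a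
divergence. -/
lemma local_entropy_balance (hG : ContDiff ℝ 2 G)
    (hf : ContDiffOn ℝ 2 (fun q : ℝ × ℝ => f q.1 q.2) (Set.univ ×ˢ Set.Ioi 0))
    (hK : ContDiff ℝ 1 fun q : ℝ × ℝ => K q.1 q.2)
    (hφ : JointC 2 φ) (hθ : JointC 2 θ) (hpos : ∀ t x, 0 < θ t x)
    (hu : ∀ i, JointC 1 fun t x => u t x i) {t : ℝ} {x : Fin d → ℝ}
    (hAC : dt φ t x + dot (u t x) (grad (φ t) x)
        = -(M (φ t x) (θ t x)) * chemMu G f φ θ t x / θ t x)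
    (hIE : dt (intE f φ θ) t x + dot (u t x) (grad (intE f φ θ t) x)
        = -divg (fun y i => K (φ t y) (θ t y) * pd i (fun z => (θ t z)⁻¹) y) x
          + η (φ t x) (θ t x) * (∑ i, ∑ j, (symGrad (u t) x i j) ^ 2)
          - (∑ i, ∑ j, korteweg G φ θ t x i j * pd i (fun y => u t y j) x)
          + Q t x)
    (hDF : divg (u t) x = 0) :
    dt (entS G f φ θ) t x = entProdDensity G f M K η φ θ u t x + Q t x / θ t x
      + divg (entFlux G f K φ θ u t) x := by
  have hφ1 : JointC 1 φ := hφ.of_le (by norm_num)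
  have hθ1 : JointC 1 θ := hθ.of_le (by norm_num)
  have hE := jointC_intE hf hφ1 hθ1 hpos
  have hS := jointC_entS hG hf hφ hθ1 hpos
  have hP : ∀ i, JointC 1 fun t => pd i (φ t) := fun i => hφ.pd i (by norm_num)
  have hA := jointC_matDeriv hφ hu
  have sl : ∀ {g : ℝ → (Fin d → ℝ) → ℝ}, JointC 1 g → DifferentiableAt ℝ (g t) x :=
    fun hg => (hg.slice t).differentiable one_ne_zero x
  have hflux : divg (entFlux G f K φ θ u t) x
      = ∑ i, -((u t x i * pd i (entS G f φ θ t) x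
            + pd i (fun y => u t y i) x * entS G f φ θ t x)
          + (grad G (grad (φ t) x) i
                * pd i (fun y => dt φ t y + dot (u t y) (grad (φ t) y)) x
              + pd i (fun y => grad G (grad (φ t) y) i) x
                * (dt φ t x + dot (u t x) (grad (φ t) x)))
          + ((θ t x)⁻¹ * pd i (fun y => K (φ t y) (θ t y) * pd i (fun z => (θ t z)⁻¹) y) x
              + pd i (fun z => (θ t z)⁻¹) x
                * (K (φ t x) (θ t x) * pd i (fun z => (θ t z)⁻¹) x))) := by
    refine Finset.sum_congr rfl fun i _ => ?_
    have d1 := sl (hu i)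
    have d2 := sl hS
    have d3 := sl (jointC_gradG hG hφ i)
    have d4 := sl hA
    have d5 : DifferentiableAt ℝ (fun z => (θ t z)⁻¹) x := (sl hθ1).inv (hpos t x).ne'
    have d6 := (contDiff_heatFlux hK hφ1 hθ hpos t i).differentiable one_ne_zero x
    unfold entFlux
    rw [pd_neg, pd_add i ((d1.fun_mul d2).fun_add (d3.fun_mul d4)) (d5.fun_mul d6),
      pd_add i (d1.fun_mul d2) (d3.fun_mul d4), pd_mul i d1 d2, pd_mul i d3 d4, pd_mul i d5 d6]
  rw [hflux]
  refine balance_algebra (hpos t x) (Et := dt (intE f φ θ) t x)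
    (Ex := grad (intE f φ θ t) x) (p := grad (φ t) x)
    (Pt := fun i => dt (fun s => pd i (φ s)) t x)
    (Px := fun j i => pd j (fun y => pd i (φ t) y) x)
    (DU := fun i j => pd i (fun y => u t y j) x) ?_ ?_ rfl ?_ hAC rfl hIE hDF
  · have := gibbs hG hf hφ hθ1 hpos (t, x) (1, 0)
    rw [← dt_eq_fderiv (hE.diffAt one_ne_zero _), ← dt_eq_fderiv (hS.diffAt one_ne_zero _),
      ← dt_eq_fderiv (hφ1.diffAt one_ne_zero _)] at this
    rw [this]
    congr 3
    refine Finset.sum_congr rfl fun i _ => ?_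
    rw [dt_eq_fderiv (g := fun s => pd i (φ s)) ((hP i).diffAt one_ne_zero _)]
  · intro j
    have := gibbs hG hf hφ hθ1 hpos (t, x) (0, Pi.single j 1)
    rw [← pd_eq_fderiv j (hE.diffAt one_ne_zero _), ← pd_eq_fderiv j (hS.diffAt one_ne_zero _),
      ← pd_eq_fderiv j (hφ1.diffAt one_ne_zero _)] at this
    unfold grad
    rw [this]
    congr 3
    refine Finset.sum_congr rfl fun i _ => ?_
    rw [pd_eq_fderiv (g := fun s => pd i (φ s)) j ((hP i).diffAt one_ne_zero _)]
    rfl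
  · intro i
    have d1 : DifferentiableAt ℝ (dt φ t) x := sl (hφ.dt (by norm_num))
    have d2 : ∀ j, DifferentiableAt ℝ (fun y => u t y j) x := fun j => sl (hu j)
    have d3 : ∀ j, DifferentiableAt ℝ (fun y => pd j (φ t) y) x := fun j => sl (hP j)
    unfold dot grad
    rw [pd_add i d1 (DifferentiableAt.fun_sum fun j _ => (d2 j).fun_mul (d3 j)),
      pd_sum _ i fun j => (d2 j).fun_mul (d3 j), pd_dt_comm hφ]
    congr 1
    refine Finset.sum_congr rfl fun j _ => ?_
    rw [pd_mul i (d2 j) (d3 j), pd_pd_comm hφ t x i j]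

lemma continuous_entProdDensity (hG : ContDiff ℝ 2 G)
    (hf : ContDiffOn ℝ 2 (fun q : ℝ × ℝ => f q.1 q.2) (Set.univ ×ˢ Set.Ioi 0))
    (hM : Continuous fun q : ℝ × ℝ => M q.1 q.2) (hK : Continuous fun q : ℝ × ℝ => K q.1 q.2)
    (hη : Continuous fun q : ℝ × ℝ => η q.1 q.2)
    (hφ : JointC 2 φ) (hθ : JointC 2 θ) (hpos : ∀ t x, 0 < θ t x)
    (hu : ∀ i, JointC 1 fun t x => u t x i) (t : ℝ) :
    Continuous (entProdDensity G f M K η φ θ u t) := by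
  have cφ := (hφ.slice t).continuous
  have cθ := (hθ.slice t).continuous
  have cpair := cφ.prodMk cθ
  have cM : Continuous fun x => M (φ t x) (θ t x) := hM.comp cpair
  have cK : Continuous fun x => K (φ t x) (θ t x) := hK.comp cpair
  have cη : Continuous fun x => η (φ t x) (θ t x) := hη.comp cpair
  have hθ0 : ∀ x, θ t x ≠ 0 := fun x => (hpos t x).ne'
  have cμ : Continuous (chemMu G f φ θ t) := by
    refine (cθ.neg.mul (continuous_finsetSum _ fun i _ => ?_)).add ?_
    · exact (((jointC_gradG hG hφ i).slice t).pd_slice (n := 0) i (by norm_num)).continuous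
    · exact ((jointC_dfdphi hf (hφ.of_le (by norm_num)) (hθ.of_le (by norm_num))
        hpos).slice t).continuous
  have cr : ∀ i, Continuous fun x => pd i (fun z => (θ t z)⁻¹) x := fun i =>
    (((hθ.slice t).inv hθ0).pd_slice (n := 1) i (by norm_num)).continuous
  have cDu : ∀ i j, Continuous fun x => pd i (fun y => u t y j) x := fun i j =>
    (((hu j).slice t).pd_slice (n := 0) i (by norm_num)).continuous
  refine ((cM.mul ((cμ.div cθ hθ0).pow 2)).add
    (cK.mul (continuous_finsetSum _ fun i _ => (cr i).pow 2))).add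
    ((cη.div cθ hθ0).mul (continuous_finsetSum _ fun i _ => continuous_finsetSum _ fun j _ => ?_))
  exact (((cDu i j).add (cDu j i)).div_const 2).pow 2

lemma entProd_nonneg (hM : ∀ a b, 0 < M a b) (hK : ∀ a b, 0 < K a b) (hη : ∀ a b, 0 < η a b)
    (hpos : ∀ t x, 0 < θ t x) (t : ℝ) : 0 ≤ entProd L G f M K η φ θ u t := by
  refine integral_nonneg fun x => ?_
  have h1 := hM (φ t x) (θ t x)
  have h2 := hK (φ t x) (θ t x)
  have h3 := hη (φ t x) (θ t x)
  have h4 := hpos t x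
  dsimp only [Pi.zero_apply]
  positivity

end Balance

/-- entropy balance and entropy production for periodic NACNS solutions. -/
theorem nacns_entropy_production
    {d : ℕ} (hd : d = 1 ∨ d = 2 ∨ d = 3)
    (T : ℝ) (hT : 0 < T) (L : Fin d → ℝ) (hL : ∀ i, 0 < L i)
    (G : (Fin d → ℝ) → ℝ) (hG : ContDiff ℝ 2 G)
    (f : ℝ → ℝ → ℝ)
    (hf : ContDiffOn ℝ 2 (fun q : ℝ × ℝ => f q.1 q.2) (Set.univ ×ˢ Set.Ioi 0))
    (M K η : ℝ → ℝ → ℝ)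
    (hM : ContDiff ℝ (⊤ : ℕ∞) fun q : ℝ × ℝ => M q.1 q.2) (hMpos : ∀ a b, 0 < M a b)
    (hK : ContDiff ℝ (⊤ : ℕ∞) fun q : ℝ × ℝ => K q.1 q.2) (hKpos : ∀ a b, 0 < K a b)
    (hη : ContDiff ℝ (⊤ : ℕ∞) fun q : ℝ × ℝ => η q.1 q.2) (hηpos : ∀ a b, 0 < η a b)
    (φ θ ptilde : ℝ → (Fin d → ℝ) → ℝ)
    (u : ℝ → (Fin d → ℝ) → Fin d → ℝ)
    (Q : ℝ → (Fin d → ℝ) → ℝ) (b : ℝ → (Fin d → ℝ) → Fin d → ℝ)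
    (hφ : ContDiff ℝ (⊤ : ℕ∞) fun q : ℝ × (Fin d → ℝ) => φ q.1 q.2)
    (hθsm : ContDiff ℝ (⊤ : ℕ∞) fun q : ℝ × (Fin d → ℝ) => θ q.1 q.2)
    (hpsm : ContDiff ℝ (⊤ : ℕ∞) fun q : ℝ × (Fin d → ℝ) => ptilde q.1 q.2)
    (husm : ContDiff ℝ (⊤ : ℕ∞) fun q : ℝ × (Fin d → ℝ) => u q.1 q.2)
    (hQsm : ContDiff ℝ (⊤ : ℕ∞) fun q : ℝ × (Fin d → ℝ) => Q q.1 q.2)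
    (hbsm : ContDiff ℝ (⊤ : ℕ∞) fun q : ℝ × (Fin d → ℝ) => b q.1 q.2)
    (hθpos : ∀ t x, 0 < θ t x)
    (hφper : ∀ t, SpacePeriodic L (φ t))
    (hθper : ∀ t, SpacePeriodic L (θ t))
    (hpper : ∀ t, SpacePeriodic L (ptilde t))
    (huper : ∀ t j, SpacePeriodic L fun x => u t x j)
    (hQper : ∀ t, SpacePeriodic L (Q t))
    (hbper : ∀ t j, SpacePeriodic L fun x => b t x j)
    -- (AC): ∂ₜφ + u·∇φ = -Mμ/θ
    (hAC : ∀ t ∈ Set.Ioo (0 : ℝ) T, ∀ x,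
      dt φ t x + dot (u t x) (grad (φ t) x)
        = -(M (φ t x) (θ t x)) * chemMu G f φ θ t x / θ t x)
    -- (IE): ∂ₜe + u·∇e = -div(K∇(1/θ)) + η|Du|² - σ̃:∇u + Q
    (hIE : ∀ t ∈ Set.Ioo (0 : ℝ) T, ∀ x,
      dt (intE f φ θ) t x + dot (u t x) (grad (intE f φ θ t) x)
        = -divg (fun y i => K (φ t y) (θ t y) * pd i (fun z => (θ t z)⁻¹) y) x
          + η (φ t x) (θ t x) * (∑ i, ∑ j, (symGrad (u t) x i j) ^ 2)
          - (∑ i, ∑ j, korteweg G φ θ t x i j * pd i (fun y => u t y j) x)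
          + Q t x)
    -- (NS): ∂ₜu + (u·∇)u = div(ηDu) - ∇p̃ - div(σ̃) + b
    (hNS : ∀ t ∈ Set.Ioo (0 : ℝ) T, ∀ x, ∀ j,
      dt (fun s y => u s y j) t x + ∑ i, u t x i * pd i (fun y => u t y j) x
        = (∑ i, pd i (fun y => η (φ t y) (θ t y) * symGrad (u t) y i j) x)
          - pd j (ptilde t) x
          - (∑ i, pd i (fun y => korteweg G φ θ t y i j) x)
          + b t x j)
    -- (DF): div(u) = 0
    (hDF : ∀ t ∈ Set.Ioo (0 : ℝ) T, ∀ x, divg (u t) x = 0)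
    :
    (∀ t ∈ Set.Ioo (0 : ℝ) T,
      deriv (fun s => ∫ x in box L, entS G f φ θ s x) t
        = entProd L G f M K η φ θ u t + ∫ x in box L, Q t x / θ t x) ∧
    (∀ t ∈ Set.Ioo (0 : ℝ) T, 0 ≤ entProd L G f M K η φ θ u t) ∧
    ((∀ t x, Q t x = 0) →
      ∀ t₁ ∈ Set.Ioo (0 : ℝ) T, ∀ t₂ ∈ Set.Ioo (0 : ℝ) T, t₁ ≤ t₂ →
        (∫ x in box L, entS G f φ θ t₁ x) ≤ ∫ x in box L, entS G f φ θ t₂ x) := by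
  have top2 : (2 : WithTop ℕ∞) ≤ ((⊤ : ℕ∞) : WithTop ℕ∞) :=
    WithTop.coe_le_coe.2 (le_top (a := (2 : ℕ∞)))
  have top1 : (1 : WithTop ℕ∞) ≤ ((⊤ : ℕ∞) : WithTop ℕ∞) :=
    WithTop.coe_le_coe.2 (le_top (a := (1 : ℕ∞)))
  have hφ2 : JointC 2 φ := hφ.of_le top2
  have hθ2 : JointC 2 θ := hθsm.of_le top2
  have hu1 : ∀ i, JointC 1 fun t x => u t x i := fun i => (contDiff_pi.1 husm i).of_le top1
  have hK1 : ContDiff ℝ 1 fun q : ℝ × ℝ => K q.1 q.2 := hK.of_le top1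
  have hS : JointC 1 (entS G f φ θ) := jointC_entS hG hf hφ2 (hθ2.of_le (by norm_num)) hθpos
  have hderiv : ∀ t ∈ Set.Ioo (0 : ℝ) T,
      HasDerivAt (fun s => ∫ x in box L, entS G f φ θ s x)
        (entProd L G f M K η φ θ u t + ∫ x in box L, Q t x / θ t x) t := by
    intro t ht
    have hV := contDiff_entFlux hG hf hK1 hφ2 hθ2 hθpos hu1 t
    have i1 := integrableOn_box (L := L) (continuous_entProdDensity hG hf hM.continuous
      hK.continuous hη.continuous hφ2 hθ2 hθpos hu1 t)
    have i2 : IntegrableOn (fun x => Q t x / θ t x) (box L) :=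
      integrableOn_box ((JointC.slice hQsm t).continuous.div
        (JointC.slice hθsm t).continuous fun x => (hθpos t x).ne')
    have i3 : IntegrableOn (divg (entFlux G f K φ θ u t)) (box L) :=
      integrableOn_box (continuous_finsetSum _ fun i _ =>
        ((hV i).pd_slice (n := 0) i (by norm_num)).continuous)
    have h := hasDerivAt_integral_box (L := L) hS t
    have hint : ∫ x in box L, dt (entS G f φ θ) t x
        = entProd L G f M K η φ θ u t + ∫ x in box L, Q t x / θ t x := by
      calc ∫ x in box L, dt (entS G f φ θ) t x
          = ∫ x in box L, (entProdDensity G f M K η φ θ u t x + Q t x / θ t x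
              + divg (entFlux G f K φ θ u t) x) := by
            congr 1
            funext x
            exact local_entropy_balance hG hf hK1 hφ2 hθ2 hθpos hu1 (hAC t ht x) (hIE t ht x)
              (hDF t ht x)
        _ = _ := by
            rw [integral_add (Integrable.fun_add i1 i2) i3, integral_add i1 i2, integral_divg_eq_zero hL _ hV
              (periodic_entFlux hφper hθper huper t), add_zero]
            rfl
    rwa [hint] at h
  have hnn : ∀ t, 0 ≤ entProd L G f M K η φ θ u t :=
    entProd_nonneg hMpos hKpos hηpos hθpos
  refine ⟨fun t ht => (hderiv t ht).deriv, fun t _ => hnn t, fun hQ0 => ?_⟩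
  refine monotoneOn_of_deriv_nonneg (convex_Ioo 0 T)
    (fun t ht => (hderiv t ht).continuousAt.continuousWithinAt) ?_ ?_
  · rw [interior_Ioo]
    exact fun t ht => (hderiv t ht).differentiableAt.differentiableWithinAt
  · rw [interior_Ioo]
    intro t ht
    rw [(hderiv t ht).deriv]
    simpa [hQ0] using hnn t
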